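/- Let ε = (1−i−j+k)/2, let r₂ = (0; 1, −1) and r₃ = (0; 1, −ε) be the indicated roots of L = Λ⊕H, and let R = φ_{r₃}^i ∘ φ_{r₂}^j. Then for every λ ∈ Λ and every purely imaginary quaternion z, T_{λ,z}⁻¹ ∘ R ∘ T_{λ,z} ∘ R⁻¹ = T_{λ(ε̄−1), εzε̄ − z + Im⟨λε̄, −λ⟩}. -/

import Mathlib

/- Formalization over the ring ℋ of Hurwitz integers inside the real quaternions. -/

noncomputable section
open Quaternion Finset

/-- The real quaternions ℍ. -/
abbrev Quat := Quaternion ℝ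

/-- The quaternion `i`. -/
def qi : Quat := ⟨0, 1, 0, 0⟩
/-- The quaternion `j`. -/
def qj : Quat := ⟨0, 0, 1, 0⟩
/-- The quaternion `k`. -/
def qk : Quat := ⟨0, 0, 0, 1⟩
/-- `p = 1 - i`. -/
def qp : Quat := 1 - qi

/-- A quaternion is a Hurwitz integer if it is `(a+bi+cj+dk)/2` with
`a,b,c,d` integers which are all congruent mod `2`. -/
def IsHurwitz (q : Quat) : Prop :=
  ∃ a b c d : ℤ, a % 2 = b % 2 ∧ b % 2 = c % 2 ∧ c % 2 = d % 2 ∧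
    q = ⟨(a : ℝ) / 2, (b : ℝ) / 2, (c : ℝ) / 2, (d : ℝ) / 2⟩

/-- A unit of the ring ℋ of Hurwitz integers. -/
def IsUnitH (q : Quat) : Prop :=
  IsHurwitz q ∧ ∃ r : Quat, IsHurwitz r ∧ q * r = 1 ∧ r * q = 1

/-- Membership in the (two-sided) ideal `pℋ`. -/
def InPH (q : Quat) : Prop := ∃ h : Quat, IsHurwitz h ∧ q = qp * h

/-- `ω = (−1+i+j+k)/2`. -/
def omg : Quat := ⟨-1/2, 1/2, 1/2, 1/2⟩

/-- Membership in the ideal `2ℋ`. -/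
def In2H (q : Quat) : Prop := ∃ h : Quat, IsHurwitz h ∧ q = 2 * h
/-- Membership in the ideal `(2+2i)ℋ`. -/
def In2p2iH (q : Quat) : Prop := ∃ h : Quat, IsHurwitz h ∧ q = (2 + 2 * qi) * h

/-- The quaternionic Leech lattice `Λ` (coordinates `(v∞,v₀,v₁,v₂,v₃,v₄)`). -/
def memLeech (v : Fin 6 → Quat) : Prop :=
  (∀ s, IsHurwitz (v s)) ∧
  InPH (v 3 - v 4) ∧ InPH (v 4 - v 5) ∧
  In2H ((v 2 + v 5) * star omg + (v 3 + v 4) * omg) ∧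
  In2H ((v 1 + v 2) * omg + (v 3 + v 5) * star omg) ∧
  In2p2iH (-(v 0) * (qi + qj + qk) + v 1 + v 2 + v 3 + v 4 + v 5)

/-- The ambient space of `L = Λ ⊕ H`: vectors `(λ; μ, ν)`. -/
abbrev VL : Type := (Fin 6 → Quat) × Quat × Quat

/-- The form on (the ambient space of) the Leech lattice: `⟨x,y⟩ = −(1/2) Σ x̄ₛ yₛ`. -/
def ipLeech (x y : Fin 6 → Quat) : Quat := -(2 : Quat)⁻¹ * ∑ s : Fin 6, star (x s) * y s

/-- The ℋ-valued form on `L = Λ ⊕ H`. -/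
def ipLL (x y : VL) : Quat :=
  ipLeech x.1 y.1 + star x.2.1 * star qp * y.2.2 + star x.2.2 * qp * y.2.1

/-- Membership in the lattice `L = Λ ⊕ H`. -/
def memLL (v : VL) : Prop := memLeech v.1 ∧ IsHurwitz v.2.1 ∧ IsHurwitz v.2.2

/-- Right scalar multiplication on the ambient space of `Λ ⊕ H`. -/
def rmulL (v : VL) (q : Quat) : VL := (fun s => v.1 s * q, v.2.1 * q, v.2.2 * q)

/-- The `μ`-reflection in a root `r` : `v ↦ v − r(1−μ)⟨r,v⟩/|r|²`. -/
def reflL (r : VL) (μ : Quat) (v : VL) : VL := v - rmulL r ((1 - μ) * ipLL r v / ipLL r r)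

/-- Right scalar multiplication on (the ambient space of) the Leech lattice. -/
def rmulLam (lam : Fin 6 → Quat) (q : Quat) : Fin 6 → Quat := fun s => lam s * q

/-- The translation `T_{λ,z}` :
`(m; μ, ν) ↦ (m + λμ; μ, ν − p̄⁻¹⟨λ,m⟩ + p̄⁻¹(z − ⟨λ,λ⟩/2)μ)`. -/
def Tlz (lam : Fin 6 → Quat) (z : Quat) (v : VL) : VL :=
  (v.1 + rmulLam lam v.2.1, v.2.1,
   v.2.2 - (star qp)⁻¹ * ipLeech lam v.1 + (star qp)⁻¹ * (z - ipLeech lam lam / 2) * v.2.1)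

/-- The imaginary part `Im q = (q − q̄)/2` of a quaternion. -/
def Imq (q : Quat) : Quat := (q - star q) / 2

/-- `ε = (1−i−j+k)/2`. -/
def eps : Quat := ⟨1/2, -1/2, -1/2, 1/2⟩

/-- The root `r₂ = (0; 1, −1)` of `Λ ⊕ H`. -/
def r2 : VL := (0, 1, -1)
/-- The root `r₃ = (0; 1, −ε)` of `Λ ⊕ H`. -/
def r3 : VL := (0, 1, -eps)

/-- `R = φ_{r₃}^i ∘ φ_{r₂}^j`. -/
def Rf : VL → VL := fun v => reflL r3 qi (reflL r2 qj v)

/-- Coefficient describing the action of `R` on the last coordinate. -/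
def dcf : Quat := ⟨1/2, -1/2, 1/2, 1/2⟩

/-- The quaternion `1/2`. -/
def hfq : Quat := ⟨1/2, 0, 0, 0⟩

/-- The inverse of `star p`. -/
def pbi : Quat := ⟨1/2, -1/2, 0, 0⟩

@[simp] theorem qi_re : qi.re = 0 := rfl
@[simp] theorem qi_imI : qi.imI = 1 := rfl
@[simp] theorem qi_imJ : qi.imJ = 0 := rfl
@[simp] theorem qi_imK : qi.imK = 0 := rfl
@[simp] theorem qj_re : qj.re = 0 := rfl
@[simp] theorem qj_imI : qj.imI = 0 := rfl
@[simp] theorem qj_imJ : qj.imJ = 1 := rfl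
@[simp] theorem qj_imK : qj.imK = 0 := rfl
@[simp] theorem eps_re : eps.re = 1/2 := rfl
@[simp] theorem eps_imI : eps.imI = -1/2 := rfl
@[simp] theorem eps_imJ : eps.imJ = -1/2 := rfl
@[simp] theorem eps_imK : eps.imK = 1/2 := rfl
@[simp] theorem dcf_re : dcf.re = 1/2 := rfl
@[simp] theorem dcf_imI : dcf.imI = -1/2 := rfl
@[simp] theorem dcf_imJ : dcf.imJ = 1/2 := rfl
@[simp] theorem dcf_imK : dcf.imK = 1/2 := rfl
@[simp] theorem hfq_re : hfq.re = 1/2 := rfl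
@[simp] theorem hfq_imI : hfq.imI = 0 := rfl
@[simp] theorem hfq_imJ : hfq.imJ = 0 := rfl
@[simp] theorem hfq_imK : hfq.imK = 0 := rfl
@[simp] theorem pbi_re : pbi.re = 1/2 := rfl
@[simp] theorem pbi_imI : pbi.imI = -1/2 := rfl
@[simp] theorem pbi_imJ : pbi.imJ = 0 := rfl
@[simp] theorem pbi_imK : pbi.imK = 0 := rfl

/-- The off-diagonal coefficient of `R`. -/
def ccf : Quat := ⟨3/2, -1/2, 1/2, -1/2⟩

@[simp] theorem ccf_re : ccf.re = 3/2 := rfl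
@[simp] theorem ccf_imI : ccf.imI = -1/2 := rfl
@[simp] theorem ccf_imJ : ccf.imJ = 1/2 := rfl
@[simp] theorem ccf_imK : ccf.imK = -1/2 := rfl

theorem two_quat : (2 : Quat) = ((2 : ℝ) : Quat) := by norm_cast

theorem two_inv_quat : (2 : Quat)⁻¹ = hfq := by
  have h : (2 : Quat) * hfq = 1 := by
    rw [two_quat]; ext <;> simp
  exact inv_eq_of_mul_eq_one_right h

theorem neg_two_inv_quat : (-2 : Quat)⁻¹ = -hfq := by
  rw [inv_neg, two_inv_quat]

theorem star_qp_inv : (star qp)⁻¹ = pbi := by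
  have h : (star qp) * pbi = 1 := by
    ext <;> simp [qp] <;> norm_num
  exact inv_eq_of_mul_eq_one_right h

theorem ip_zero_left (y : Fin 6 → Quat) : ipLeech 0 y = 0 := by
  simp [ipLeech]

theorem half_comm (q : Quat) : q * (2 : Quat)⁻¹ = (2 : Quat)⁻¹ * q := by
  rw [two_inv_quat]; ext <;> simp [mul_comm]

theorem ip_rmul_left (x y : Fin 6 → Quat) (q : Quat) :
    ipLeech (rmulLam x q) y = star q * ipLeech x y := by
  simp only [ipLeech, rmulLam, star_mul, mul_assoc, ← Finset.mul_sum]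
  rw [neg_mul, neg_mul, mul_neg, ← mul_assoc, ← mul_assoc, half_comm]

theorem ip_rmul_right (x y : Fin 6 → Quat) (q : Quat) :
    ipLeech x (rmulLam y q) = ipLeech x y * q := by
  simp only [ipLeech, rmulLam, ← mul_assoc, ← Finset.sum_mul]

theorem ip_add_right (x y w : Fin 6 → Quat) :
    ipLeech x (y + w) = ipLeech x y + ipLeech x w := by
  simp only [ipLeech, Pi.add_apply, mul_add, Finset.sum_add_distrib]

theorem ip_neg_right (x y : Fin 6 → Quat) :
    ipLeech x (fun s => -(y s)) = - ipLeech x y := by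
  simp [ipLeech]

theorem ip_self_im (x : Fin 6 → Quat) :
    star (ipLeech x x) = ipLeech x x := by
  have h : star (2 : Quat)⁻¹ = (2 : Quat)⁻¹ := by
    rw [two_inv_quat]; ext <;> simp
  simp only [ipLeech, star_mul, star_neg, h, star_sum, star_star]
  rw [mul_neg, half_comm, neg_mul]

theorem r2_norm : ipLL r2 r2 = -2 := by
  rw [two_quat]
  ext <;> simp [ipLL, r2, ip_zero_left, qp] <;> norm_num

theorem r3_norm : ipLL r3 r3 = -2 := by
  rw [two_quat]
  ext <;> simp [ipLL, r3, ip_zero_left, qp] <;> norm_num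

theorem Rf_eq (v : VL) : Rf v = (v.1, eps * v.2.1, ccf * v.2.1 + dcf * v.2.2) := by
  obtain ⟨m, a, b⟩ := v
  simp only [Rf, reflL, r2_norm, r3_norm, div_eq_mul_inv, neg_two_inv_quat]
  refine Prod.ext ?_ (Prod.ext ?_ ?_)
  · funext s
    simp [rmulL, r2, r3]
  · ext <;> simp [rmulL, r2, r3, ipLL, ip_zero_left, qp] <;> ring
  · ext <;> simp [rmulL, r2, r3, ipLL, ip_zero_left, qp] <;> ring

/-- For every `λ ∈ Λ` and purely imaginary `z`,
`T_{λ,z}⁻¹ ∘ R ∘ T_{λ,z} ∘ R⁻¹ = T_{λ(ε̄−1), εzε̄ − z + Im⟨λε̄, −λ⟩}`, stated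
equivalently (avoiding inverses) as `R ∘ T_{λ,z} = T_{λ,z} ∘ T' ∘ R`. -/
theorem commutator_with_translation (lam : Fin 6 → Quat) (z : Quat)
    (hlam : memLeech lam) (hz : z.re = 0) :
    ∀ v : VL, Rf (Tlz lam z v) =
      Tlz lam z (Tlz (rmulLam lam (star eps - 1))
        (eps * z * star eps - z + Imq (ipLeech (rmulLam lam (star eps)) (fun s => -(lam s))))
        (Rf v)) := by
  rintro ⟨m, a, b⟩
  have hN := ip_self_im lam
  simp only [Rf_eq, Tlz, ip_rmul_left, ip_rmul_right, ip_add_right, ip_neg_right, Imq,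
    div_eq_mul_inv, two_inv_quat, star_qp_inv]
  generalize ipLeech lam lam = N at hN
  generalize ipLeech lam m = M
  have h1 : N.imI = 0 := by have := congrArg (fun q : Quat => q.imI) hN; simp at this; linarith
  have h2 : N.imJ = 0 := by have := congrArg (fun q : Quat => q.imJ) hN; simp at this; linarith
  have h3 : N.imK = 0 := by have := congrArg (fun q : Quat => q.imK) hN; simp at this; linarith
  refine Prod.ext ?_ (Prod.ext ?_ ?_)
  · funext s
    have he : star eps * eps = 1 := by ext <;> simp <;> norm_num
    have h : star eps * (eps * a) = a := by rw [← mul_assoc, he, one_mul]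
    simp only [Pi.add_apply, rmulLam, mul_assoc, sub_mul, one_mul, mul_sub, h]
    abel
  · rfl
  · ext <;> simp [h1, h2, h3] <;> ring

-- Statement 3 (for reference, proved in its own file):
-- `R ∘ T_{λ,z} = T_{λε̄, εzε̄} ∘ R`.
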